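/- arXiv:1006.1251 — 5 statements merged into one kernel-verified Lean document; each statement's English description precedes it below -/
import Mathlib

section
/- Let B and A be unital complex algebras with A a *-algebra, let δ : B → B ⊗ A be an algebra homomorphism, and let u ∈ M_m(A) satisfy Σ_{p=1}^m (u_{rp})* u_{sp} = δ_{rs}·1_A for all r, s. Let w ∈ M_n(A). Suppose V ∈ M_{mn}(B), indexed by pairs (p,i) with 1 ≤ p ≤ m, 1 ≤ i ≤ n, is (u⊙w)-fixed for δ, i.e. δ(V_{(p,i),(q,j)}) = Σ_{(r,k)} Σ_{(s,l)} V_{(r,k),(s,l)} ⊗ (u_{rp} w_{ki})* (u_{sq} w_{lj}) for all (p,i),(q,j). Then the matrix D ∈ M_n(B) defined by D_{ij} = Σ_{p=1}^m V_{(p,i),(p,j)} is w-fixed for δ, i.e. δ(D_{ij}) = Σ_{k,l=1}^n D_{kl} ⊗ (w_{ki})* w_{lj} for all i, j. -/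
open scoped TensorProduct

/-- `Z ∈ M_d(B)` is `u`-fixed for `δ`: membership in the fixed point
algebra `(B ⊗ M_d)^{δ_u}`. -/
def IsFixed {B A : Type*} [Ring B] [Algebra ℂ B] [Ring A] [Algebra ℂ A] [StarRing A]
    {d : Type*} [Fintype d] (δ : B →ₐ[ℂ] B ⊗[ℂ] A)
    (u : Matrix d d A) (Z : Matrix d d B) : Prop :=
  ∀ i j, δ (Z i j) = ∑ l, ∑ m, Z l m ⊗ₜ[ℂ] (star (u l i) * u m j)

/-!
Being `u`-fixed means that `δ`, applied entrywise to `Z`, gives `u* Z u`. In `(u ⊗ w)* V (u ⊗ w)`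
the factors of `u` stand next to each other, between those of `w`:
`(u r p * w k i)* (u s p * w l j)` is `(w k i)* ((u r p)* u s p) w l j`. Summing over `p` replaces
`(u r p)* u s p` by the Kronecker delta of `r` and `s`, which leaves `w* D w` for the partial
trace `D` of `V`.
-/

open scoped Matrix Kronecker

section PartialTrace

variable {M N m n : Type*} [AddCommMonoid M] [AddCommMonoid N] [Fintype m]

/-- The partial trace over the first tensor factor of a matrix indexed by pairs: the map
`tr ⊗ id` from `M_m ⊗ M_n` to `M_n`, with the non-normalized trace. -/
def partialTrace (V : Matrix (m × n) (m × n) M) : Matrix n n M :=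
  Matrix.of fun i j => ∑ p, V (p, i) (p, j)

lemma partialTrace_apply (V : Matrix (m × n) (m × n) M) (i j : n) :
    partialTrace V i j = ∑ p, V (p, i) (p, j) :=
  rfl

lemma partialTrace_map {F : Type*} [FunLike F M N] [AddMonoidHomClass F M N] (f : F)
    (V : Matrix (m × n) (m × n) M) :
    (partialTrace V).map f = partialTrace (V.map f) := by
  ext i j
  simp only [Matrix.map_apply, partialTrace_apply, map_sum]

end PartialTrace

lemma sum_star_kronecker_mul_kronecker {A m m' n n' : Type*} [Semiring A] [StarMul A] [Fintype m']
    (u : Matrix m m' A) (w : Matrix n n' A) (r s : m) (k l : n) (i j : n') :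
    ∑ p, star ((u ⊗ₖ w) (r, k) (p, i)) * (u ⊗ₖ w) (s, l) (p, j) =
      star (w k i) * (u.map star * uᵀ) r s * w l j := by
  simp only [Matrix.kronecker_apply, Matrix.mul_apply, Matrix.map_apply, Matrix.transpose_apply,
    Finset.mul_sum, Finset.sum_mul, star_mul, mul_assoc]

section StarConj

variable {R M A d e : Type*} [CommSemiring R] [AddCommMonoid M] [Module R M]
  [Semiring A] [Module R A] [Fintype d]

variable (R) in
/-- The conjugate `u* Z u` of a matrix `Z` over `M` by a matrix `u` over `A`, with entries in
`M ⊗ A`: the matrix `(1 ⊗ u)* (Z ⊗ 1) (1 ⊗ u)`, which makes sense without a product on `M`.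
When `u` is unitary, the fixed points of `δ_u` are the `Z` that `δ` maps to `u* Z u`. -/
def starConj [Star A] (u : Matrix d e A) (Z : Matrix d d M) : Matrix e e (M ⊗[R] A) :=
  Matrix.of fun i j => ∑ l, ∑ m, Z l m ⊗ₜ[R] (star (u l i) * u m j)

lemma starConj_apply [Star A] (u : Matrix d e A) (Z : Matrix d d M) (i j : e) :
    starConj R u Z i j = ∑ l, ∑ m, Z l m ⊗ₜ[R] (star (u l i) * u m j) :=
  rfl

variable {m m' n n' : Type*} [Fintype m] [Fintype m'] [Fintype n] [StarMul A]

lemma partialTrace_starConj_kronecker_apply (u : Matrix m m' A) (w : Matrix n n' A)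
    (V : Matrix (m × n) (m × n) M) (i j : n') :
    partialTrace (starConj R (u ⊗ₖ w) V) i j =
      ∑ a, ∑ b, V a b ⊗ₜ[R] (star (w a.2 i) * (u.map star * uᵀ) a.1 b.1 * w b.2 j) := by
  simp only [partialTrace_apply, starConj_apply, ← sum_star_kronecker_mul_kronecker,
    TensorProduct.tmul_sum]
  rw [Finset.sum_comm]
  exact Finset.sum_congr rfl fun a _ => Finset.sum_comm

lemma partialTrace_starConj_kronecker [DecidableEq m] {u : Matrix m m' A}
    (hu : u.map star * uᵀ = 1) (w : Matrix n n' A) (V : Matrix (m × n) (m × n) M) :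
    partialTrace (starConj R (u ⊗ₖ w) V) = starConj R w (partialTrace V) := by
  ext i j
  calc partialTrace (starConj R (u ⊗ₖ w) V) i j
      = ∑ a, ∑ b, V a b ⊗ₜ[R] (star (w a.2 i) * (1 : Matrix m m A) a.1 b.1 * w b.2 j) := by
        rw [partialTrace_starConj_kronecker_apply, hu]
    _ = ∑ k, ∑ l, ∑ r, V (r, k) (r, l) ⊗ₜ[R] (star (w k i) * w l j) := by
        simp only [Fintype.sum_prod_type_right, Matrix.one_apply, mul_ite, ite_mul, mul_one,
          mul_zero, zero_mul, TensorProduct.tmul_ite, Finset.sum_ite_eq, Finset.mem_univ, if_true]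
        exact Finset.sum_congr rfl fun k _ => Finset.sum_comm
    _ = starConj R w (partialTrace V) i j := by
        simp only [starConj_apply, partialTrace_apply, TensorProduct.sum_tmul]

theorem stmt1_general [DecidableEq m] {F : Type*} [FunLike F M (M ⊗[R] A)]
    [AddMonoidHomClass F M (M ⊗[R] A)] {δ : F} {u : Matrix m m A} (hu : u.map star * uᵀ = 1)
    (w : Matrix n n A) {V : Matrix (m × n) (m × n) M} (hV : V.map δ = starConj R (u ⊗ₖ w) V) :
    (partialTrace V).map δ = starConj R w (partialTrace V) := by
  rw [partialTrace_map, hV, partialTrace_starConj_kronecker hu]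

end StarConj

lemma isFixed_iff_map_eq_starConj {B A d : Type*} [Ring B] [Algebra ℂ B] [Ring A] [Algebra ℂ A]
    [StarRing A] [Fintype d] {δ : B →ₐ[ℂ] B ⊗[ℂ] A} {u : Matrix d d A} {Z : Matrix d d B} :
    IsFixed δ u Z ↔ Z.map δ = starConj ℂ u Z :=
  Matrix.ext_iff

/-- If `Σ_p (u_{rp})* u_{sp} = δ_{rs} 1_A` (the adjoint of `u` is unitary) and
`V ∈ M_{mn}(B)` is `(u⊙w)`-fixed for `δ`, then the partial trace
`D_{ij} = Σ_p V_{(p,i),(p,j)}` is `w`-fixed for `δ`. -/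
theorem stmt1 {B A : Type*} [Ring B] [Algebra ℂ B] [Ring A] [Algebra ℂ A] [StarRing A]
    {m n : ℕ} (δ : B →ₐ[ℂ] B ⊗[ℂ] A)
    (u : Matrix (Fin m) (Fin m) A)
    (hu : ∀ r s : Fin m,
      ∑ p : Fin m, star (u r p) * u s p = if r = s then (1 : A) else 0)
    (w : Matrix (Fin n) (Fin n) A)
    (V : Matrix (Fin m × Fin n) (Fin m × Fin n) B)
    (hV : IsFixed δ (fun pr qs : Fin m × Fin n => u pr.1 qs.1 * w pr.2 qs.2) V) :
    IsFixed δ w (fun i j => ∑ p : Fin m, V (p, i) (p, j)) :=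
  isFixed_iff_map_eq_starConj.2 <|
    stmt1_general (Matrix.ext hu) w (isFixed_iff_map_eq_starConj.1 hV)
end

section
/- Let B and A be unital complex *-algebras and let δ : B → B ⊗ A be a *-algebra homomorphism. Let u ∈ M_m(A) be arbitrary and let w ∈ M_n(A) satisfy Σ_{i=1}^n w_{ai} (w_{ki})* = δ_{ak}·1_A for all a, k. Let y_1, …, y_n ∈ B satisfy δ(y_i) = Σ_{k=1}^n y_k ⊗ w_{ki} for all i (a spectral row for w). If Z ∈ M_{mn}(B), indexed by pairs, is (u⊙w)-fixed for δ, i.e. δ(Z_{(p,i),(q,j)}) = Σ_{(r,k)} Σ_{(s,l)} Z_{(r,k),(s,l)} ⊗ (u_{rp} w_{ki})* (u_{sq} w_{lj}), then the matrix W ∈ M_m(B) with entries W_{pq} = Σ_{i,j=1}^n y_i · Z_{(p,i),(q,j)} · (y_j)* is u-fixed for δ, i.e. δ(W_{pq}) = Σ_{r,s=1}^m W_{rs} ⊗ (u_{rp})* u_{sq} for all p, q. -/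
open scoped TensorProduct

/-- The star operation on the algebraic tensor product `B ⊗[ℂ] A`,
determined by `(b ⊗ a)* = b* ⊗ a*`. -/
noncomputable def tensorStar (B A : Type*) [Ring B] [Algebra ℂ B] [StarRing B]
    [StarModule ℂ B] [Ring A] [Algebra ℂ A] [StarRing A] [StarModule ℂ A] :
    B ⊗[ℂ] A →+ B ⊗[ℂ] A :=
  TensorProduct.liftAddHom
    { toFun := fun b =>
        { toFun := fun a => star b ⊗ₜ[ℂ] star a
          map_zero' := by simp
          map_add' := fun a a' => by simp [star_add, TensorProduct.tmul_add] }
      map_zero' := by ext a; simp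
      map_add' := fun b b' => by ext a; simp [star_add, TensorProduct.add_tmul] }
    (fun c b a => by
      show star (c • b) ⊗ₜ[ℂ] star a = star b ⊗ₜ[ℂ] star (c • a)
      rw [star_smul, star_smul, TensorProduct.smul_tmul])

/-!
Write `ι(b) = b ⊗ 1` and `j(a) = 1 ⊗ a`; the two ranges commute. A spectral row satisfies
`δ(y) = ι(y) j(w)`, so `w wᴴ = 1` gives `δ(y) j(wᴴ) = ι(y)`, and dually `j(w) δ(y*) = ι(y*)`.
Cutting a `(u ⊙ w)`-fixed `Z` into `n × n` blocks `Z_{pq}`, fixedness reads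
`δ(Z_{pq}) = ∑_{r,s} j(wᴴ) (Z_{rs} ⊗ (u_{rp})* u_{sq}) j(w)`, and in
`δ(y Z_{pq} y*) = δ(y) δ(Z_{pq}) δ(y*)` the outer factors `j(wᴴ)` and `j(w)` are absorbed.
-/

open Matrix
open scoped Kronecker

section Semiring

variable {R B A κ μ : Type*} [CommSemiring R] [Semiring B] [Algebra R B] [Semiring A]
  [Algebra R A] [Fintype μ]

theorem map_one_tmul_mul_map_one_tmul_of_mul_eq_one [DecidableEq κ] {v : Matrix κ μ A}
    {w : Matrix μ κ A} (hvw : v * w = 1) :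
    v.map ((1 : B) ⊗ₜ[R] ·) * w.map ((1 : B) ⊗ₜ[R] ·) = 1 := by
  have map_mul : v.map ((1 : B) ⊗ₜ[R] ·) * w.map ((1 : B) ⊗ₜ[R] ·) =
      (v * w).map ((1 : B) ⊗ₜ[R] ·) :=
    (Matrix.map_mul (f := Algebra.TensorProduct.includeRight (R := R) (A := B))).symm
  rw [map_mul, hvw]
  exact Matrix.map_one _ (TensorProduct.tmul_zero ..) rfl

variable [Fintype κ]

theorem tmul_one_dotProduct_map_tmul_mulVec_tmul_one (y : κ → B) (z : μ → B)
    (M : Matrix κ μ B) (a : A) :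
    (y · ⊗ₜ[R] (1 : A)) ⬝ᵥ (M.map (· ⊗ₜ[R] a) *ᵥ (z · ⊗ₜ[R] (1 : A))) =
      (y ⬝ᵥ (M *ᵥ z)) ⊗ₜ[R] a := by
  simp [dotProduct, mulVec, ← TensorProduct.sum_tmul]

/-- `y` is a spectral row for `w`: as a row vector, `δ(y) = (y ⊗ 1)(1 ⊗ w)`. The adjoint column of
such a row is encoded as a spectral row for the entrywise adjoint `w.map star`. -/
def IsSpectralRow (δ : B →ₐ[R] B ⊗[R] A) (w : Matrix κ κ A) (y : κ → B) : Prop :=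
  ∀ i, δ (y i) = ∑ k, y k ⊗ₜ[R] w k i

namespace IsSpectralRow

variable {δ : B →ₐ[R] B ⊗[R] A} {v w : Matrix κ κ A} {y : κ → B}

theorem comp_eq_vecMul (hy : IsSpectralRow δ w y) :
    δ ∘ y = (y · ⊗ₜ[R] (1 : A)) ᵥ* w.map ((1 : B) ⊗ₜ[R] ·) := by
  ext i
  simp [hy i, vecMul, dotProduct]

theorem comp_eq_mulVec (hy : IsSpectralRow δ wᵀ y) :
    δ ∘ y = w.map ((1 : B) ⊗ₜ[R] ·) *ᵥ (y · ⊗ₜ[R] (1 : A)) := by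
  ext i
  simp [hy i, mulVec, dotProduct]

variable [DecidableEq κ]

theorem comp_vecMul_of_mul_eq_one (hy : IsSpectralRow δ w y) (hwv : w * v = 1) :
    (δ ∘ y) ᵥ* v.map ((1 : B) ⊗ₜ[R] ·) = (y · ⊗ₜ[R] (1 : A)) := by
  rw [hy.comp_eq_vecMul, vecMul_vecMul, map_one_tmul_mul_map_one_tmul_of_mul_eq_one hwv,
    vecMul_one]

theorem mulVec_comp_of_mul_eq_one (hy : IsSpectralRow δ vᵀ y) (hwv : w * v = 1) :
    w.map ((1 : B) ⊗ₜ[R] ·) *ᵥ (δ ∘ y) = (y · ⊗ₜ[R] (1 : A)) := by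
  rw [hy.comp_eq_mulVec, mulVec_mulVec, map_one_tmul_mul_map_one_tmul_of_mul_eq_one hwv,
    one_mulVec]

end IsSpectralRow

end Semiring

theorem tensorStar_tmul {B A : Type*} [Ring B] [Algebra ℂ B] [StarRing B] [StarModule ℂ B]
    [Ring A] [Algebra ℂ A] [StarRing A] [StarModule ℂ A] (b : B) (a : A) :
    tensorStar B A (b ⊗ₜ[ℂ] a) = star b ⊗ₜ[ℂ] star a :=
  rfl

theorem IsSpectralRow.star {B A κ : Type*} [Ring B] [Algebra ℂ B] [StarRing B] [StarModule ℂ B]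
    [Ring A] [Algebra ℂ A] [StarRing A] [StarModule ℂ A] [Fintype κ] {δ : B →ₐ[ℂ] B ⊗[ℂ] A}
    (hδ : ∀ b, δ (star b) = tensorStar B A (δ b)) {w : Matrix κ κ A} {y : κ → B}
    (hy : IsSpectralRow δ w y) : IsSpectralRow δ (w.map star) (star y) := by
  intro i
  simp only [Pi.star_apply, hδ, hy i, map_sum, tensorStar_tmul, map_apply]

section IsFixed

variable {B A ι κ : Type*} [Ring B] [Algebra ℂ B] [Ring A] [Algebra ℂ A] [StarRing A]
  [Fintype ι] [Fintype κ]

theorem IsFixed.map_submatrix {δ : B →ₐ[ℂ] B ⊗[ℂ] A} {u : Matrix ι ι A} {w : Matrix κ κ A}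
    {Z : Matrix (ι × κ) (ι × κ) B} (hZ : IsFixed δ (u ⊗ₖ w) Z) (p q : ι) :
    (Z.submatrix (Prod.mk p) (Prod.mk q)).map δ =
      ∑ r, ∑ s, wᴴ.map ((1 : B) ⊗ₜ[ℂ] ·) *
        ((Z.submatrix (Prod.mk r) (Prod.mk s)).map (· ⊗ₜ[ℂ] (star (u r p) * u s q)) *
          w.map ((1 : B) ⊗ₜ[ℂ] ·)) := by
  ext i j
  simp only [map_apply, submatrix_apply, hZ _ _, Fintype.sum_prod_type, kroneckerMap_apply,
    star_mul, Matrix.sum_apply, Matrix.mul_apply, conjTranspose_apply, Finset.mul_sum,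
    Algebra.TensorProduct.tmul_mul_tmul, one_mul, mul_one, mul_assoc]
  exact Finset.sum_congr rfl fun r _ => Finset.sum_comm

theorem stmt2_general [DecidableEq κ] (δ : B →ₐ[ℂ] B ⊗[ℂ] A) (u : Matrix ι ι A)
    (w : Matrix κ κ A) (hw : w * wᴴ = 1) (y z : κ → B) (hy : IsSpectralRow δ w y)
    (hz : IsSpectralRow δ (w.map star) z) (Z : Matrix (ι × κ) (ι × κ) B)
    (hZ : IsFixed δ (u ⊗ₖ w) Z) :
    IsFixed δ u (fun p q => ∑ i, ∑ j, y i * Z (p, i) (q, j) * z j) := by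
  intro p q
  let block (r s : ι) : Matrix κ κ B := Z.submatrix (Prod.mk r) (Prod.mk s)
  have sum_eq (r s : ι) :
      ∑ i, ∑ j, y i * Z (r, i) (s, j) * z j = y ⬝ᵥ (block r s *ᵥ z) := by
    simp only [block, dotProduct, mulVec, submatrix_apply, Finset.mul_sum, mul_assoc]
  simp only [sum_eq]
  calc
    δ (y ⬝ᵥ (block p q *ᵥ z))
      = (δ ∘ y) ⬝ᵥ ((block p q).map δ *ᵥ (δ ∘ z)) := by
        simp [dotProduct, mulVec]
    _ = ∑ r, ∑ s, ((δ ∘ y) ᵥ* wᴴ.map ((1 : B) ⊗ₜ[ℂ] ·)) ⬝ᵥ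
          ((block r s).map (· ⊗ₜ[ℂ] (star (u r p) * u s q)) *ᵥ
            (w.map ((1 : B) ⊗ₜ[ℂ] ·) *ᵥ (δ ∘ z))) := by
        simp only [block, hZ.map_submatrix, sum_mulVec, dotProduct_sum, ← dotProduct_mulVec,
          mulVec_mulVec]
    _ = ∑ r, ∑ s, (y ⬝ᵥ (block r s *ᵥ z)) ⊗ₜ[ℂ] (star (u r p) * u s q) := by
        simp only [hy.comp_vecMul_of_mul_eq_one hw,
          IsSpectralRow.mulVec_comp_of_mul_eq_one (v := wᴴ) hz hw,
          tmul_one_dotProduct_map_tmul_mulVec_tmul_one]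

end IsFixed

/-- Formula (1) of the paper: if `δ` is a *-algebra homomorphism, `u ∈ M_m(A)` is
arbitrary, `w ∈ M_n(A)` satisfies `Σ_i w_{ai} (w_{ki})* = δ_{ak} 1_A`, the `y_i`
form a spectral row for `w`, and `Z ∈ M_{mn}(B)` is `(u⊙w)`-fixed for `δ`, then
`W_{pq} = Σ_{i,j} y_i Z_{(p,i),(q,j)} (y_j)*` is `u`-fixed for `δ`. -/
theorem stmt2 {B A : Type*} [Ring B] [Algebra ℂ B] [StarRing B] [StarModule ℂ B]
    [Ring A] [Algebra ℂ A] [StarRing A] [StarModule ℂ A]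
    {m n : ℕ} (δ : B →ₐ[ℂ] B ⊗[ℂ] A)
    (hδ : ∀ b : B, δ (star b) = tensorStar B A (δ b))
    (u : Matrix (Fin m) (Fin m) A)
    (w : Matrix (Fin n) (Fin n) A)
    (hw : ∀ a k : Fin n,
      ∑ i : Fin n, w a i * star (w k i) = if a = k then (1 : A) else 0)
    (y : Fin n → B)
    (hy : ∀ i : Fin n, δ (y i) = ∑ k : Fin n, y k ⊗ₜ[ℂ] w k i)
    (Z : Matrix (Fin m × Fin n) (Fin m × Fin n) B)
    (hZ : IsFixed δ (fun pr qs : Fin m × Fin n => u pr.1 qs.1 * w pr.2 qs.2) Z) :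
    IsFixed δ u
      (fun p q => ∑ i : Fin n, ∑ j : Fin n, y i * Z (p, i) (q, j) * star (y j)) := by
  have hw_mul : w * wᴴ = 1 := Matrix.ext fun a k => (hw a k).trans one_apply.symm
  exact stmt2_general δ u w hw_mul y (star y) hy (IsSpectralRow.star hδ hy) Z hZ
end

section
/- Let B and A be unital complex algebras and let δ : B → B ⊗ A be an algebra homomorphism. Let u ∈ M_m(A) and w ∈ M_n(A). Suppose X ∈ M_m(B) is u-spectral for δ (δ(X_{lk}) = Σ_{a=1}^m X_{la} ⊗ u_{ak} for all l, k) and Y ∈ M_n(B) is w-spectral for δ (δ(Y_{ij}) = Σ_{b=1}^n Y_{ib} ⊗ w_{bj} for all i, j). Then the matrix X⊙Y ∈ M_{mn}(B), indexed by pairs, with entries (X⊙Y)_{(l,i),(k,j)} = X_{lk} · Y_{ij}, is (u⊙w)-spectral for δ: δ((X⊙Y)_{(l,i),(k,j)}) = Σ_{(a,b)} (X⊙Y)_{(l,i),(a,b)} ⊗ (u_{ak} w_{bj}) for all (l,i), (k,j). -/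
open scoped TensorProduct

/-- `X ∈ M_d(B)` is `u`-spectral for `δ`: membership in the spectral subspace `B₂^δ(u)`. -/
def IsSpectral {B A : Type*} [Ring B] [Algebra ℂ B] [Ring A] [Algebra ℂ A]
    {d : Type*} [Fintype d] (δ : B →ₐ[ℂ] B ⊗[ℂ] A)
    (u : Matrix d d A) (X : Matrix d d B) : Prop :=
  ∀ i j, δ (X i j) = ∑ k, X i k ⊗ₜ[ℂ] u k j

section Spectral

open scoped Kronecker

variable {R B A : Type*} [CommSemiring R]
  [NonUnitalNonAssocSemiring B] [Module R B] [SMulCommClass R B B] [IsScalarTower R B B]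
  [NonUnitalNonAssocSemiring A] [Module R A] [SMulCommClass R A A] [IsScalarTower R A A]

theorem sum_tmul_mul_sum_tmul {ι κ : Type*} (s : Finset ι) (t : Finset κ)
    (x : ι → B) (a : ι → A) (y : κ → B) (b : κ → A) :
    (∑ i ∈ s, x i ⊗ₜ[R] a i) * (∑ j ∈ t, y j ⊗ₜ[R] b j) =
      ∑ p ∈ s ×ˢ t, (x p.1 * y p.2) ⊗ₜ[R] (a p.1 * b p.2) := by
  simp only [Finset.sum_mul_sum, Finset.sum_product, Algebra.TensorProduct.tmul_mul_tmul]

theorem stmt3_general {F l m n p : Type*} [Fintype m] [Fintype n]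
    [FunLike F B (B ⊗[R] A)] [MulHomClass F B (B ⊗[R] A)] (δ : F)
    (u : Matrix m m A) (w : Matrix n n A) (X : Matrix l m B) (Y : Matrix p n B)
    (hX : ∀ i j, δ (X i j) = ∑ k, X i k ⊗ₜ[R] u k j)
    (hY : ∀ i j, δ (Y i j) = ∑ k, Y i k ⊗ₜ[R] w k j) (i : l × p) (j : m × n) :
    δ ((X ⊗ₖ Y) i j) = ∑ k, (X ⊗ₖ Y) i k ⊗ₜ[R] (u ⊗ₖ w) k j :=
  calc δ (X i.1 j.1 * Y i.2 j.2)
      = δ (X i.1 j.1) * δ (Y i.2 j.2) := map_mul δ _ _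
    _ = (∑ k, X i.1 k ⊗ₜ[R] u k j.1) * ∑ k, Y i.2 k ⊗ₜ[R] w k j.2 := by rw [hX, hY]
    _ = ∑ k : m × n, (X i.1 k.1 * Y i.2 k.2) ⊗ₜ[R] (u k.1 j.1 * w k.2 j.2) :=
      sum_tmul_mul_sum_tmul _ _ _ _ _ _

end Spectral

/-- If `X ∈ B₂^δ(u)` and `Y ∈ B₂^δ(w)`, then the Kronecker product
`X⊙Y`, with entries `(X⊙Y)_{(l,i),(k,j)} = X_{lk} Y_{ij}`, lies in `B₂^δ(u⊙w)`. -/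
theorem stmt3 {B A : Type*} [Ring B] [Algebra ℂ B] [Ring A] [Algebra ℂ A]
    {m n : ℕ} (δ : B →ₐ[ℂ] B ⊗[ℂ] A)
    (u : Matrix (Fin m) (Fin m) A) (w : Matrix (Fin n) (Fin n) A)
    (X : Matrix (Fin m) (Fin m) B) (Y : Matrix (Fin n) (Fin n) B)
    (hX : IsSpectral δ u X) (hY : IsSpectral δ w Y) :
    IsSpectral δ
      (fun pr qs : Fin m × Fin n => u pr.1 qs.1 * w pr.2 qs.2)
      (fun li kj : Fin m × Fin n => X li.1 kj.1 * Y li.2 kj.2) :=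
  stmt3_general δ u w X Y hX hY
end

section
/- Let B and A be unital complex algebras with A a *-algebra, let δ : B → B ⊗ A be an algebra homomorphism, and let u ∈ M_d(A) satisfy Σ_{k=1}^d u_{lk} (u_{rk})* = δ_{lr}·1_A for all l, r. If M ∈ M_d(B) is u-spectral for δ and Z ∈ M_d(B) is u-fixed for δ, then the matrix product M·Z ∈ M_d(B) is u-spectral for δ. -/
open scoped TensorProduct

/-!
Entrywise application of `δ` gives `δ(M) = (M ⊗ 1)(1 ⊗ u)` for spectral `M` and
`δ(Z) = (1 ⊗ u*)(Z ⊗ 1)(1 ⊗ u)` for fixed `Z`. In the product `δ(MZ) = δ(M) δ(Z)` the inner factors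
`(1 ⊗ u)(1 ⊗ u*)` cancel.
-/

section MatrixForm

variable {R B A m n p q : Type*} [CommSemiring R] [Semiring B] [Algebra R B]
  [Semiring A] [Algebra R A]

variable (R A) in
/-- The matrix `X ⊗ 1` over `B ⊗ A`, with entries `X i j ⊗ 1`, used to write the spectral and fixed
conditions as matrix identities. The base ring and `A` are explicit since `X` does not determine
them. -/
def tensorOne (X : Matrix m n B) : Matrix m n (B ⊗[R] A) :=
  X.map fun x => x ⊗ₜ 1

variable (R B) in
/-- The matrix `1 ⊗ a` over `B ⊗ A`, with entries `1 ⊗ a i j`, the counterpart of `tensorOne` for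
matrices over `A`. The base ring and `B` are explicit since `a` does not determine them. -/
def oneTensor (a : Matrix m n A) : Matrix m n (B ⊗[R] A) :=
  a.map fun x => 1 ⊗ₜ x

theorem tensorOne_mul [Fintype n] (X : Matrix m n B) (Y : Matrix n p B) :
    tensorOne R A (X * Y) = tensorOne R A X * tensorOne R A Y :=
  Matrix.map_mul (f := (Algebra.TensorProduct.includeLeftRingHom : B →+* B ⊗[R] A))

theorem oneTensor_mul [Fintype n] (a : Matrix m n A) (b : Matrix n p A) :
    oneTensor R B (a * b) = oneTensor R B a * oneTensor R B b :=
  Matrix.map_mul (f := (Algebra.TensorProduct.includeRight : A →ₐ[R] B ⊗[R] A))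

theorem oneTensor_one [DecidableEq n] : oneTensor R B (1 : Matrix n n A) = 1 :=
  Matrix.map_one _ (TensorProduct.tmul_zero A 1) rfl

theorem tensorOne_mul_oneTensor_apply [Fintype n] (X : Matrix m n B) (a : Matrix n p A)
    (i : m) (j : p) :
    (tensorOne R A X * oneTensor R B a) i j = ∑ k, X i k ⊗ₜ[R] a k j := by
  simp [tensorOne, oneTensor, Matrix.mul_apply]

theorem oneTensor_mul_tensorOne_mul_oneTensor_apply [Fintype n] [Fintype p]
    (a : Matrix m n A) (X : Matrix n p B) (b : Matrix p q A) (i : m) (j : q) :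
    (oneTensor R B a * (tensorOne R A X * oneTensor R B b)) i j =
      ∑ k, ∑ l, X k l ⊗ₜ[R] (a i k * b l j) := by
  rw [Matrix.mul_apply]
  simp only [tensorOne_mul_oneTensor_apply, Finset.mul_sum]
  simp [oneTensor]

theorem stmt8_general [Fintype n] [DecidableEq n] [Fintype p] (δ : B →ₙ+* B ⊗[R] A)
    {u v : Matrix n n A} {w : Matrix p p A} (huv : u * v = 1)
    {M : Matrix m n B} {Z : Matrix n p B}
    (hM : M.map δ = tensorOne R A M * oneTensor R B u)
    (hZ : Z.map δ = oneTensor R B v * (tensorOne R A Z * oneTensor R B w)) :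
    (M * Z).map δ = tensorOne R A (M * Z) * oneTensor R B w := by
  have cancel : oneTensor R B u * oneTensor R B v = 1 := by
    rw [← oneTensor_mul, huv, oneTensor_one]
  calc (M * Z).map δ
      = M.map δ * Z.map δ := Matrix.map_mul
    _ = tensorOne R A M * ((oneTensor R B u * oneTensor R B v) *
          (tensorOne R A Z * oneTensor R B w)) := by
        rw [hM, hZ]
        simp only [Matrix.mul_assoc]
    _ = tensorOne R A (M * Z) * oneTensor R B w := by
        rw [cancel, Matrix.one_mul, ← Matrix.mul_assoc, tensorOne_mul]

end MatrixForm

section Complex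

variable {B A d : Type*} [Ring B] [Algebra ℂ B] [Ring A] [Algebra ℂ A] [Fintype d]
  {δ : B →ₐ[ℂ] B ⊗[ℂ] A} {u : Matrix d d A}

theorem isSpectral_iff_map_eq {X : Matrix d d B} :
    IsSpectral δ u X ↔ X.map δ = tensorOne ℂ A X * oneTensor ℂ B u := by
  simp only [IsSpectral, ← Matrix.ext_iff, Matrix.map_apply, tensorOne_mul_oneTensor_apply]

theorem isFixed_iff_map_eq [StarRing A] {Z : Matrix d d B} :
    IsFixed δ u Z ↔
      Z.map δ = oneTensor ℂ B u.conjTranspose * (tensorOne ℂ A Z * oneTensor ℂ B u) := by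
  simp only [IsFixed, ← Matrix.ext_iff, Matrix.map_apply, Matrix.conjTranspose_apply,
    oneTensor_mul_tensorOne_mul_oneTensor_apply]

end Complex

/-- If `Σ_k u_{lk} (u_{rk})* = δ_{lr} 1_A`, `M ∈ B₂^δ(u)` and
`Z ∈ (B ⊗ M_d)^{δ_u}`, then `M·Z ∈ B₂^δ(u)`: the spectral subspace is stable
under right multiplication by the fixed point algebra. -/
theorem stmt8 {B A : Type*} [Ring B] [Algebra ℂ B] [Ring A] [Algebra ℂ A] [StarRing A]
    {d : ℕ} (δ : B →ₐ[ℂ] B ⊗[ℂ] A)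
    (u : Matrix (Fin d) (Fin d) A)
    (hu : ∀ l r : Fin d,
      ∑ k : Fin d, u l k * star (u r k) = if l = r then (1 : A) else 0)
    (M Z : Matrix (Fin d) (Fin d) B)
    (hM : IsSpectral δ u M) (hZ : IsFixed δ u Z) :
    IsSpectral δ u (M * Z) := by
  exact isSpectral_iff_map_eq.mpr <| stmt8_general (δ : B →ₙ+* B ⊗[ℂ] A) (Matrix.ext hu)
    (isSpectral_iff_map_eq.mp hM) (isFixed_iff_map_eq.mp hZ)
end

section
/- Let B and A be unital complex algebras with A a *-algebra, let δ : B → B ⊗ A be an algebra homomorphism, and let u ∈ M_d(A) satisfy Σ_{k=1}^d u_{mk} (u_{rk})* = δ_{mr}·1_A for all m, r. If Z, Z' ∈ M_d(B) are both u-fixed for δ, then the matrix product Z·Z' ∈ M_d(B) is u-fixed for δ. -/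
open scoped TensorProduct

/-!
Write `U = 1 ⊗ u` and `U* = 1 ⊗ u*` in `M_d(B ⊗ A)`. Entrywise, `Z` is `u`-fixed exactly when
`δ(Z) = U* (Z ⊗ 1) U`. Since `δ` is multiplicative and `U U* = 1`,
`δ(Z Z') = U* (Z ⊗ 1) U U* (Z' ⊗ 1) U = U* (Z Z' ⊗ 1) U`.
-/

section Tensor

open Algebra.TensorProduct

variable {R A B m n p q : Type*} [CommSemiring R] [Semiring A] [Algebra R A] [Semiring B]
  [Algebra R B] [Fintype n] [Fintype p]

lemma map_includeRight_mul_map_includeLeft_mul_map_includeRight_apply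
    (v : Matrix m n A) (Z : Matrix n p B) (w : Matrix p q A) (i : m) (j : q) :
    (v.map (includeRight : A →ₐ[R] B ⊗[R] A) * Z.map (includeLeft : B →ₐ[R] B ⊗[R] A) *
      w.map (includeRight : A →ₐ[R] B ⊗[R] A)) i j =
      ∑ l, ∑ k, Z l k ⊗ₜ[R] (v i l * w k j) := by
  simp only [Matrix.mul_apply, Matrix.map_apply, includeRight_apply, includeLeft_apply,
    Finset.sum_mul, tmul_mul_tmul, one_mul, mul_one]
  exact Finset.sum_comm

end Tensor

section FixedPoints

open Algebra.TensorProduct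
open scoped Matrix

variable {B A d : Type*} [Ring B] [Algebra ℂ B] [Ring A] [Algebra ℂ A] [StarRing A] [Fintype d]
  {δ : B →ₐ[ℂ] B ⊗[ℂ] A} {u : Matrix d d A} {Z Z' : Matrix d d B}

lemma isFixed_iff_map_eq_s9 :
    IsFixed δ u Z ↔ Z.map δ =
      uᴴ.map (includeRight : A →ₐ[ℂ] B ⊗[ℂ] A) * Z.map (includeLeft : B →ₐ[ℂ] B ⊗[ℂ] A) *
        u.map (includeRight : A →ₐ[ℂ] B ⊗[ℂ] A) := by
  simp only [IsFixed, ← Matrix.ext_iff, Matrix.map_apply, Matrix.conjTranspose_apply,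
    map_includeRight_mul_map_includeLeft_mul_map_includeRight_apply]

theorem stmt9_general [DecidableEq d] (hu : u * uᴴ = 1) (hZ : IsFixed δ u Z)
    (hZ' : IsFixed δ u Z') : IsFixed δ u (Z * Z') := by
  rw [isFixed_iff_map_eq_s9] at hZ hZ' ⊢
  set ιA : A →ₐ[ℂ] B ⊗[ℂ] A := includeRight
  set ιB : B →ₐ[ℂ] B ⊗[ℂ] A := includeLeft
  have hU : u.map ιA * uᴴ.map ιA = 1 := by
    rw [← Matrix.map_mul, hu, Matrix.map_one _ (map_zero ιA) (map_one ιA)]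
  calc (Z * Z').map δ
      = (uᴴ.map ιA * Z.map ιB * u.map ιA) * (uᴴ.map ιA * Z'.map ιB * u.map ιA) := by
        rw [Matrix.map_mul, hZ, hZ']
    _ = uᴴ.map ιA * Z.map ιB * (u.map ιA * uᴴ.map ιA) * Z'.map ιB * u.map ιA := by
        simp only [mul_assoc]
    _ = uᴴ.map ιA * (Z * Z').map ιB * u.map ιA := by
        rw [hU, mul_one, Matrix.map_mul, mul_assoc (uᴴ.map ιA)]

end FixedPoints

/-- If `Σ_k u_{mk} (u_{rk})* = δ_{mr} 1_A` and `Z, Z'` are `u`-fixed for `δ`,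
then so is `Z·Z'`: the fixed point set `(B ⊗ M_d)^{δ_u}` is closed under
multiplication. -/
theorem stmt9 {B A : Type*} [Ring B] [Algebra ℂ B] [Ring A] [Algebra ℂ A] [StarRing A]
    {d : ℕ} (δ : B →ₐ[ℂ] B ⊗[ℂ] A)
    (u : Matrix (Fin d) (Fin d) A)
    (hu : ∀ m r : Fin d,
      ∑ k : Fin d, u m k * star (u r k) = if m = r then (1 : A) else 0)
    (Z Z' : Matrix (Fin d) (Fin d) B)
    (hZ : IsFixed δ u Z) (hZ' : IsFixed δ u Z') :
    IsFixed δ u (Z * Z') :=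
  stmt9_general (by ext m r; simpa [Matrix.mul_apply, Matrix.one_apply] using hu m r) hZ hZ'
end
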